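/- arXiv:2604.00054 — 5 statements merged into one kernel-verified Lean document; each statement's English description precedes it below -/
import Mathlib

section
/- Let b be a prime, m = b², and let χ be a primitive odd Dirichlet character modulo m. Then the Fourier coefficient of the centered collision invariant factorizes as Ŝ°(χ) = −B_{1,χ̄}·conj(S_G(χ))/φ(m), where B_{1,χ̄} is the generalized first Bernoulli number attached to χ̄ and S_G(χ) is the diagonal character sum. -/
open Finset
open scoped Classical

namespace Collision

/-- The diagonal set `G = {n < b² : ⌊n/b⌋ = n mod b}`. -/
def diagSet (b : ℕ) : Finset ℕ :=
  (Finset.range (b ^ 2)).filter (fun n => n / b = n % b)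

/-- The slice increment `d_n(a) = ⌊(n+1)a/b²⌋ − ⌊na/b²⌋`. -/
def d (b n a : ℕ) : ℤ :=
  ((((n + 1) * a) / b ^ 2 : ℕ) : ℤ) - (((n * a) / b ^ 2 : ℕ) : ℤ)

/-- The collision invariant `S(a) = −1 − ⌊a/b⌋ + Σ_{n∈G} d_n(a)`. -/
def S (b a : ℕ) : ℤ :=
  -1 - ((a / b : ℕ) : ℤ) + ∑ n ∈ diagSet b, d b n a

/-- The units `a' ∈ {0,…,b²−1}` with `a' ≡ a (mod b)`. -/
def cosetUnits (b a : ℕ) : Finset ℕ :=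
  (Finset.range (b ^ 2)).filter (fun a' => Nat.gcd a' (b ^ 2) = 1 ∧ a' % b = a % b)

/-- The centered collision invariant `S°(a)`. -/
noncomputable def Scirc (b a : ℕ) : ℝ :=
  (S b a : ℝ) - (1 / (b : ℝ)) * ∑ a' ∈ cosetUnits b a, (S b a' : ℝ)

/-- The Fourier coefficient `Ŝ°(χ) = (1/φ(b²))·Σ_a S°(a)·χ̄(a)`. -/
noncomputable def Shat (b : ℕ) (χ : DirichletCharacter ℂ (b ^ 2)) : ℂ :=
  (1 / (Nat.totient (b ^ 2) : ℂ)) *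
    ∑ a ∈ Finset.range (b ^ 2), (Scirc b a : ℂ) * starRingEnd ℂ (χ (a : ZMod (b ^ 2)))

/-- The generalized first Bernoulli number `B_{1,χ̄} = (1/b²)·Σ_a a·χ̄(a)`. -/
noncomputable def B1bar (b : ℕ) (χ : DirichletCharacter ℂ (b ^ 2)) : ℂ :=
  (1 / ((b : ℂ) ^ 2)) *
    ∑ a ∈ Finset.range (b ^ 2), (a : ℂ) * starRingEnd ℂ (χ (a : ZMod (b ^ 2)))

/-- The diagonal character sum `S_G(χ) = Σ_{n∈G} [χ̄(n+1) − χ̄(n)]`. -/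
noncomputable def SG (b : ℕ) (χ : DirichletCharacter ℂ (b ^ 2)) : ℂ :=
  ∑ n ∈ diagSet b,
    (starRingEnd ℂ (χ ((n + 1 : ℕ) : ZMod (b ^ 2))) - starRingEnd ℂ (χ (n : ZMod (b ^ 2))))

end Collision

namespace Collision

lemma range_sum_zmod (m : ℕ) [NeZero m] (f : ℕ → ℂ) :
    ∑ a ∈ Finset.range m, f a = ∑ x : ZMod m, f x.val := by
  symm
  refine Finset.sum_bij (fun x _ => x.val) ?_ ?_ ?_ ?_
  · intro x _; exact Finset.mem_range.2 (ZMod.val_lt x)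
  · intro x _ y _ h; exact ZMod.val_injective m h
  · intro a ha
    exact ⟨(a : ZMod m), Finset.mem_univ _, ZMod.val_natCast_of_lt (Finset.mem_range.1 ha)⟩
  · intro x _; rfl

lemma exists_unit (b : ℕ) (hb : b.Prime) (χ : DirichletCharacter ℂ (b ^ 2))
    (hprim : χ.IsPrimitive) :
    ∃ u : (ZMod (b ^ 2))ˣ, χ u ≠ 1 ∧ (u : ZMod (b ^ 2)).val % b = 1 % b := by
  have : NeZero (b ^ 2) := ⟨pow_ne_zero _ hb.ne_zero⟩
  have hd : b ∣ b ^ 2 := dvd_pow_self b two_ne_zero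
  by_contra! h
  have hf : χ.FactorsThrough b := by
    rw [DirichletCharacter.factorsThrough_iff_ker_unitsMap hd]
    intro u hu
    rw [MonoidHom.mem_ker] at hu ⊢
    by_contra hne
    refine h u ?_ ?_
    · intro h1
      apply hne
      ext
      rw [MulChar.coe_toUnitHom, h1]; rfl
    · rw [Units.ext_iff, ZMod.unitsMap_val, ← ZMod.natCast_val, Units.val_one] at hu
      have : (((u : ZMod (b ^ 2)).val : ℕ) : ZMod b) = ((1 : ℕ) : ZMod b) := by
        rw [hu, Nat.cast_one]
      exact (ZMod.natCast_eq_natCast_iff' _ _ _).1 this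
  have h1 : χ.conductor ∣ b := DirichletCharacter.conductor_dvd_of_mem_conductorSet χ hf
  rw [(DirichletCharacter.isPrimitive_def χ).1 hprim] at h1
  have h2 := Nat.le_of_dvd hb.pos h1
  have h3 := hb.two_le
  nlinarith

lemma sum_inv_zero {b : ℕ} (hb : b.Prime) (χ : DirichletCharacter ℂ (b ^ 2))
    (hprim : χ.IsPrimitive) (f : ℕ → ℂ)
    (hf : ∀ a a', a % b = a' % b → f a = f a') :
    ∑ a ∈ Finset.range (b ^ 2), f a * starRingEnd ℂ (χ (a : ZMod (b ^ 2))) = 0 := by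
  have : NeZero (b ^ 2) := ⟨pow_ne_zero _ hb.ne_zero⟩
  obtain ⟨u, hu1, hu2⟩ := exists_unit b hb χ hprim
  rw [range_sum_zmod]
  simp only [ZMod.natCast_zmod_val]
  set T := ∑ x : ZMod (b ^ 2), f x.val * starRingEnd ℂ (χ x) with hT
  have key : T = starRingEnd ℂ (χ u) * T := by
    conv_lhs => rw [hT]
    rw [← Equiv.sum_comp (Units.mulLeft u), hT, Finset.mul_sum]
    refine Finset.sum_congr rfl fun x _ => ?_
    have : f ((Units.mulLeft u) x).val = f x.val := by
      apply hf
      rw [Units.mulLeft_apply, ZMod.val_mul,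
        Nat.mod_mod_of_dvd _ (dvd_pow_self b two_ne_zero), Nat.mul_mod, hu2,
        ← Nat.mul_mod, one_mul]
    rw [this, Units.mulLeft_apply, map_mul, map_mul]
    ring
  have h2 : (1 - starRingEnd ℂ (χ u)) * T = 0 := by
    rw [sub_mul, one_mul, ← key, sub_self]
  rcases mul_eq_zero.1 h2 with h | h
  · exfalso
    apply hu1
    have h' : starRingEnd ℂ (χ u) = 1 := (sub_eq_zero.1 h).symm
    have := congrArg (starRingEnd ℂ) h'
    simpa using this
  · exact h

lemma sum_mod {b : ℕ} (hb : b.Prime) (χ : DirichletCharacter ℂ (b ^ 2))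
    (hprim : χ.IsPrimitive) (n : ℕ) :
    ∑ a ∈ Finset.range (b ^ 2), ((n * a % b ^ 2 : ℕ) : ℂ) * starRingEnd ℂ (χ (a : ZMod (b ^ 2)))
      = χ (n : ZMod (b ^ 2)) *
        ∑ a ∈ Finset.range (b ^ 2), (a : ℂ) * starRingEnd ℂ (χ (a : ZMod (b ^ 2))) := by
  have : NeZero (b ^ 2) := ⟨pow_ne_zero _ hb.ne_zero⟩
  by_cases hn : IsUnit (n : ZMod (b ^ 2))
  · obtain ⟨v, hv⟩ := hn
    rw [range_sum_zmod, range_sum_zmod, ← hv]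
    simp only [ZMod.natCast_zmod_val]
    conv_rhs => rw [← Equiv.sum_comp (Units.mulLeft v), Finset.mul_sum]
    refine Finset.sum_congr rfl fun x _ => ?_
    have h1 : ((Units.mulLeft v) x).val = n * x.val % b ^ 2 := by
      rw [Units.mulLeft_apply, hv, ZMod.val_mul, ZMod.val_natCast, Nat.mod_mul_mod]
    have h2 : χ v * starRingEnd ℂ (χ v) = 1 := by
      have := MulChar.star_apply' χ (v : ZMod (b ^ 2))
      rw [RCLike.star_def] at this
      rw [this, ← MulChar.mul_apply, mul_inv_cancel, MulChar.one_apply v.isUnit]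
    rw [← h1, Units.mulLeft_apply, map_mul, map_mul]
    linear_combination (-(((v : ZMod (b ^ 2)) * x).val : ℂ) * starRingEnd ℂ (χ x)) * h2
  · rw [MulChar.map_nonunit χ hn, zero_mul]
    apply sum_inv_zero hb χ hprim (fun a => ((n * a % b ^ 2 : ℕ) : ℂ))
    intro a a' h
    have hbn : b ∣ n := by
      by_contra hbn
      apply hn
      rw [ZMod.isUnit_iff_coprime]
      exact Nat.Coprime.pow_right 2 ((Nat.Prime.coprime_iff_not_dvd hb).2 hbn).symm
    obtain ⟨k, rfl⟩ := hbn
    show ((_ : ℕ) : ℂ) = ((_ : ℕ) : ℂ)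
    congr 1
    have : a ≡ a' [MOD b] := h
    have h3 := (this.mul_left' b).mul_left k
    have h4 : k * (b * a) ≡ k * (b * a') [MOD b ^ 2] := by
      rw [pow_two]; exact h3
    have e1 : b * k * a = k * (b * a) := by ring
    have e2 : b * k * a' = k * (b * a') := by ring
    rw [e1, e2]; exact h4

lemma card_diagSet {b : ℕ} (hb : 0 < b) : (diagSet b).card = b := by
  have : diagSet b = (Finset.range b).image (fun k => k * b + k) := by
    ext n
    simp only [diagSet, Finset.mem_filter, Finset.mem_range, Finset.mem_image]
    constructor
    · rintro ⟨_, h⟩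
      refine ⟨n % b, Nat.mod_lt _ hb, ?_⟩
      conv_lhs => arg 1; rw [← h]
      rw [mul_comm]; exact Nat.div_add_mod n b
    · rintro ⟨k, hk, rfl⟩
      refine ⟨by nlinarith, ?_⟩
      rw [mul_comm, Nat.mul_add_div hb, Nat.mul_add_mod, Nat.div_eq_of_lt hk,
        Nat.mod_eq_of_lt hk, add_zero]
  rw [this, Finset.card_image_of_injective, Finset.card_range]
  intro x y h
  have h' : (b + 1) * x = (b + 1) * y := by
    have : x * b + x = y * b + y := h
    linarith
  exact Nat.eq_of_mul_eq_mul_left (Nat.succ_pos b) h'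

lemma cast_div (a m : ℕ) (hm : m ≠ 0) :
    ((a / m : ℕ) : ℂ) = ((a : ℂ) - ((a % m : ℕ) : ℂ)) / (m : ℂ) := by
  have h : (m : ℂ) ≠ 0 := Nat.cast_ne_zero.2 hm
  rw [eq_div_iff h, eq_sub_iff_add_eq, mul_comm]
  exact_mod_cast Nat.div_add_mod a m

lemma S_eq {b : ℕ} (hb : b.Prime) (a : ℕ) :
    ((S b a : ℤ) : ℂ) = -1 + ((a % b : ℕ) : ℂ) / b +
      ∑ n ∈ diagSet b, (((n * a % b ^ 2 : ℕ) : ℂ) - (((n + 1) * a % b ^ 2 : ℕ) : ℂ)) / (b : ℂ) ^ 2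
      := by
  have h0 : (b : ℂ) ≠ 0 := Nat.cast_ne_zero.2 hb.ne_zero
  have h1 : ∀ n, ((d b n a : ℤ) : ℂ) = (a : ℂ) / (b : ℂ) ^ 2 +
      (((n * a % b ^ 2 : ℕ) : ℂ) - (((n + 1) * a % b ^ 2 : ℕ) : ℂ)) / (b : ℂ) ^ 2 := by
    intro n
    rw [d, Int.cast_sub, Int.cast_natCast, Int.cast_natCast,
      cast_div _ _ (pow_ne_zero 2 hb.ne_zero), cast_div _ _ (pow_ne_zero 2 hb.ne_zero)]
    simp only [Nat.cast_mul, Nat.cast_add, Nat.cast_one, Nat.cast_pow]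
    field_simp
    ring
  rw [S, Int.cast_add, Int.cast_sum, Finset.sum_congr rfl (fun n _ => h1 n),
    Finset.sum_add_distrib, Finset.sum_const, card_diagSet hb.pos, Int.cast_sub,
    Int.cast_natCast, cast_div _ _ hb.ne_zero, nsmul_eq_mul]
  have : (b : ℂ) * ((a : ℂ) / (b : ℂ) ^ 2) = a / b := by field_simp
  rw [this]
  push_cast
  ring

end Collision

open Collision in
theorem stmt0 (b : ℕ) (hb : b.Prime) (χ : DirichletCharacter ℂ (b ^ 2))
    (hprim : χ.IsPrimitive) (hodd : χ.Odd) :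
    Shat b χ = -(B1bar b χ * starRingEnd ℂ (SG b χ)) / (Nat.totient (b ^ 2) : ℂ) := by
  have h0 : (b : ℂ) ≠ 0 := Nat.cast_ne_zero.2 hb.ne_zero
  have hS : ∀ a, ((Scirc b a : ℝ) : ℂ) = (-1 + ((a % b : ℕ) : ℂ) / b -
      (1 / (b : ℂ)) * ∑ a' ∈ cosetUnits b a, ((S b a' : ℤ) : ℂ)) +
      ∑ n ∈ diagSet b,
        (((n * a % b ^ 2 : ℕ) : ℂ) - (((n + 1) * a % b ^ 2 : ℕ) : ℂ)) / (b : ℂ) ^ 2 := by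
    intro a
    have := S_eq hb a
    have e : ((Scirc b a : ℝ) : ℂ) = ((S b a : ℤ) : ℂ) -
        (1 / (b : ℂ)) * ∑ a' ∈ cosetUnits b a, ((S b a' : ℤ) : ℂ) := by
      rw [Scirc]; push_cast; rfl
    rw [e, this]; ring
  have hz := sum_inv_zero hb χ hprim (fun a => (-1 + ((a % b : ℕ) : ℂ) / b -
      (1 / (b : ℂ)) * ∑ a' ∈ cosetUnits b a, ((S b a' : ℤ) : ℂ))) (by
        intro a a' h
        simp only [cosetUnits, h])
  have hmain : ∑ a ∈ Finset.range (b ^ 2),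
      (Scirc b a : ℂ) * starRingEnd ℂ (χ (a : ZMod (b ^ 2))) =
      -(B1bar b χ * starRingEnd ℂ (SG b χ)) := by
    rw [Finset.sum_congr rfl (fun a _ => by rw [hS a, add_mul]), Finset.sum_add_distrib, hz,
      zero_add]
    simp only [Finset.sum_mul]
    rw [Finset.sum_comm, SG, map_sum, Finset.mul_sum, ← Finset.sum_neg_distrib]
    refine Finset.sum_congr rfl fun n _ => ?_
    have e1 := sum_mod hb χ hprim n
    have e2 := sum_mod hb χ hprim (n + 1)
    rw [map_sub, Complex.conj_conj, Complex.conj_conj, B1bar]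
    have e3 : ∀ a ∈ Finset.range (b ^ 2),
        (((n * a % b ^ 2 : ℕ) : ℂ) - (((n + 1) * a % b ^ 2 : ℕ) : ℂ)) / (b : ℂ) ^ 2 *
          starRingEnd ℂ (χ (a : ZMod (b ^ 2))) =
        (1 / (b : ℂ) ^ 2) *
          (((n * a % b ^ 2 : ℕ) : ℂ) * starRingEnd ℂ (χ (a : ZMod (b ^ 2))) -
          (((n + 1) * a % b ^ 2 : ℕ) : ℂ) * starRingEnd ℂ (χ (a : ZMod (b ^ 2)))) := by
      intro a _; ring
    rw [Finset.sum_congr rfl e3, ← Finset.mul_sum, Finset.sum_sub_distrib, e1, e2]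
    ring
  rw [Shat, hmain]
  ring
end

section
/- Let b be a prime, m = b², and let χ be a primitive Dirichlet character modulo m. Then Σ_{a=0}^{m−1} χ̄(a)·{a/b} = 0, and consequently Σ_{a=0}^{m−1} χ̄(a)·⌊a/b⌋ = b·B_{1,χ̄}, where {x} denotes the fractional part. -/
open Finset
open scoped Classical

theorem stmt6_sum_range (n : ℕ) [NeZero n] (F : ZMod n → ℂ) :
    ∑ a ∈ Finset.range n, F (a : ZMod n) = ∑ x : ZMod n, F x := by
  refine Finset.sum_nbij' (fun a => (a : ZMod n)) (fun x => x.val) ?_ ?_ ?_ ?_ ?_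
  · intro a _; simp
  · intro x _; simpa using ZMod.val_lt x
  · intro a ha; exact ZMod.val_cast_of_lt (by simpa using ha)
  · intro x _; simp
  · intro a _; rfl

theorem stmt6_fract (b : ℕ) (hb : b.Prime) (χ : DirichletCharacter ℂ (b ^ 2))
    (hprim : χ.IsPrimitive) :
    ∑ a ∈ Finset.range (b ^ 2),
        starRingEnd ℂ (χ (a : ZMod (b ^ 2))) *
          (((a % b : ℕ) : ℂ) / (b : ℂ)) = 0 := by
  have : NeZero b := ⟨hb.ne_zero⟩
  have : NeZero (b ^ 2) := ⟨pow_ne_zero _ hb.ne_zero⟩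
  have hd : b ∣ b ^ 2 := dvd_pow_self b two_ne_zero
  have hnot : ¬ χ.FactorsThrough b := by
    intro h
    rw [DirichletCharacter.isPrimitive_def] at hprim
    have h2 : χ.conductor ≤ b := by
      have := DirichletCharacter.conductor_dvd_of_mem_conductorSet (χ := χ) (d := b) h
      exact Nat.le_of_dvd hb.pos this
    rw [hprim] at h2
    nlinarith [hb.two_le]
  rw [DirichletCharacter.factorsThrough_iff_ker_unitsMap hd] at hnot
  obtain ⟨u, hu, hu'⟩ := SetLike.not_le_iff_exists.mp hnot
  have hcu : ZMod.castHom hd (ZMod b) (u : ZMod (b ^ 2)) = 1 := by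
    have := congrArg Units.val (MonoidHom.mem_ker.mp hu)
    simpa [ZMod.unitsMap_def] using this
  have hχu : χ (u : ZMod (b ^ 2)) ≠ 1 := by
    intro h
    apply hu'
    rw [MonoidHom.mem_ker]
    ext
    simpa using h
  set F : ZMod (b ^ 2) → ℂ := fun x =>
    starRingEnd ℂ (χ x) * (((ZMod.castHom hd (ZMod b) x).val : ℂ) / (b : ℂ)) with hF
  have h1 : ∑ a ∈ Finset.range (b ^ 2),
        starRingEnd ℂ (χ (a : ZMod (b ^ 2))) *
          (((a % b : ℕ) : ℂ) / (b : ℂ)) = ∑ x, F x := by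
    rw [← stmt6_sum_range]
    refine Finset.sum_congr rfl fun a _ => ?_
    simp only [hF, map_natCast, ZMod.val_natCast]
  rw [h1]
  have h2 : ∑ x, F x = starRingEnd ℂ (χ u) * ∑ x, F x := by
    conv_lhs => rw [← Equiv.sum_comp (Units.mulLeft u) F]
    rw [Finset.mul_sum]
    refine Finset.sum_congr rfl fun x _ => ?_
    simp only [hF, Units.mulLeft_apply, map_mul, hcu, one_mul, mul_assoc]
  have h3 : starRingEnd ℂ (χ u) ≠ 1 := by
    intro h
    apply hχu
    simpa using congrArg (starRingEnd ℂ) h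
  have h4 : (1 - starRingEnd ℂ (χ u)) * ∑ x, F x = 0 := by
    rw [sub_mul, ← h2]; ring
  exact (mul_eq_zero.mp h4).resolve_left (sub_ne_zero.mpr h3.symm)

open Collision in
theorem stmt6 (b : ℕ) (hb : b.Prime) (χ : DirichletCharacter ℂ (b ^ 2))
    (hprim : χ.IsPrimitive) :
    (∑ a ∈ Finset.range (b ^ 2),
        starRingEnd ℂ (χ (a : ZMod (b ^ 2))) * (Complex.ofReal (Int.fract ((a : ℝ) / (b : ℝ)))) = 0) ∧
    (∑ a ∈ Finset.range (b ^ 2),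
        starRingEnd ℂ (χ (a : ZMod (b ^ 2))) * ((a / b : ℕ) : ℂ) = (b : ℂ) * B1bar b χ) := by
  have key := stmt6_fract b hb χ hprim
  have hb0 : (b : ℂ) ≠ 0 := by exact_mod_cast hb.ne_zero
  constructor
  · rw [← key]
    refine Finset.sum_congr rfl fun a _ => ?_
    rw [Int.fract_div_natCast_eq_div_natCast_mod]
    push_cast
    rfl
  · rw [B1bar, ← add_zero (∑ a ∈ Finset.range (b ^ 2), _), ← key, ← Finset.sum_add_distrib,
      ← mul_assoc, Finset.mul_sum]
    refine Finset.sum_congr rfl fun a _ => ?_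
    have h : (a : ℂ) = (b : ℂ) * ((a / b : ℕ) : ℂ) + ((a % b : ℕ) : ℂ) := by
      exact_mod_cast (Nat.div_add_mod a b).symm
    generalize starRingEnd ℂ (χ (a : ZMod (b ^ 2))) = z
    rw [h]
    field_simp
end

section
/- Let b be a prime, m = b², let χ be a primitive Dirichlet character modulo m, and let n ∈ {1,…,m−2} satisfy gcd(n,m) = 1 and gcd(n+1,m) = 1. Then Σ_{a=0}^{m−1} d_n(a)·χ̄(a) = (1 + χ(n) − χ(n+1))·B_{1,χ̄}, where d_n(a) = ⌊(n+1)a/m⌋ − ⌊na/m⌋. -/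
open Finset
open scoped Classical

theorem aux_range (m : ℕ) [NeZero m] (f : ℕ → ℂ) :
    ∑ a ∈ Finset.range m, f a = ∑ x : ZMod m, f x.val := by
  refine (Finset.sum_bij (fun (x : ZMod m) _ => x.val) ?_ ?_ ?_ ?_).symm
  · intro x _
    exact Finset.mem_range.2 (ZMod.val_lt x)
  · intro x _ y _ h
    exact ZMod.val_injective m h
  · intro a ha
    exact ⟨(a : ZMod m), Finset.mem_univ _, ZMod.val_cast_of_lt (Finset.mem_range.1 ha)⟩
  · intro x _
    rfl

theorem aux_conj (m : ℕ) [NeZero m] (χ : DirichletCharacter ℂ m) (u : (ZMod m)ˣ) :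
    χ (u : ZMod m) * starRingEnd ℂ (χ (u : ZMod m)) = 1 := by
  rw [Complex.mul_conj, Complex.normSq_eq_norm_sq, DirichletCharacter.unit_norm_eq_one]
  simp

theorem aux_mod (m : ℕ) [NeZero m] (χ : DirichletCharacter ℂ m) (k : ℕ) (hk : Nat.Coprime k m) :
    ∑ a ∈ Finset.range m, ((k * a % m : ℕ) : ℂ) * starRingEnd ℂ (χ (a : ZMod m))
      = χ (k : ZMod m) * ∑ a ∈ Finset.range m, (a : ℂ) * starRingEnd ℂ (χ (a : ZMod m)) := by
  rw [aux_range m, aux_range m, Finset.mul_sum]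
  have hu : ((ZMod.unitOfCoprime k hk : (ZMod m)ˣ) : ZMod m) = (k : ZMod m) :=
    ZMod.coe_unitOfCoprime k hk
  refine Fintype.sum_equiv (Units.mulLeft (ZMod.unitOfCoprime k hk)) _ _ ?_
  intro x
  have hv : (((k : ZMod m)) * x).val = k * x.val % m := by
    rw [ZMod.val_mul, ZMod.val_natCast, Nat.mod_mul_mod]
  have hc := aux_conj m χ (ZMod.unitOfCoprime k hk)
  rw [hu] at hc
  rw [Units.mulLeft_apply, hu, ZMod.natCast_zmod_val, ZMod.natCast_zmod_val, hv, map_mul, map_mul]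
  linear_combination (-((k * x.val % m : ℕ) : ℂ) * starRingEnd ℂ (χ x)) * hc

theorem aux_div (m : ℕ) [NeZero m] (χ : DirichletCharacter ℂ m) (k : ℕ) (hk : Nat.Coprime k m) :
    (m : ℂ) * ∑ a ∈ Finset.range m, ((k * a / m : ℕ) : ℂ) * starRingEnd ℂ (χ (a : ZMod m))
      = (k - χ (k : ZMod m)) *
        ∑ a ∈ Finset.range m, (a : ℂ) * starRingEnd ℂ (χ (a : ZMod m)) := by
  rw [sub_mul, ← aux_mod m χ k hk, Finset.mul_sum, Finset.mul_sum, ← Finset.sum_sub_distrib]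
  refine Finset.sum_congr rfl fun a _ => ?_
  have h : ((m * (k * a / m) + k * a % m : ℕ) : ℂ) = ((k * a : ℕ) : ℂ) := by
    rw [Nat.div_add_mod]
  rw [Nat.cast_add, Nat.cast_mul, Nat.cast_mul k a] at h
  linear_combination (starRingEnd ℂ (χ (a : ZMod m))) * h

open Collision in
theorem stmt7 (b : ℕ) (hb : b.Prime) (χ : DirichletCharacter ℂ (b ^ 2))
    (hprim : χ.IsPrimitive) (n : ℕ) (h1 : 1 ≤ n) (h2 : n ≤ b ^ 2 - 2)
    (hg1 : Nat.gcd n (b ^ 2) = 1) (hg2 : Nat.gcd (n + 1) (b ^ 2) = 1) :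
    ∑ a ∈ Finset.range (b ^ 2), (d b n a : ℂ) * starRingEnd ℂ (χ (a : ZMod (b ^ 2)))
      = (1 + χ (n : ZMod (b ^ 2)) - χ ((n + 1 : ℕ) : ZMod (b ^ 2))) * B1bar b χ := by
  have hb0 : (b : ℂ) ≠ 0 := Nat.cast_ne_zero.2 hb.ne_zero
  haveI : NeZero (b ^ 2) := ⟨pow_ne_zero 2 hb.ne_zero⟩
  have e1 := aux_div (b ^ 2) χ n hg1
  have e2 := aux_div (b ^ 2) χ (n + 1) hg2
  have hs : ∑ a ∈ Finset.range (b ^ 2), (d b n a : ℂ) * starRingEnd ℂ (χ (a : ZMod (b ^ 2)))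
      = ∑ a ∈ Finset.range (b ^ 2),
          (((n + 1) * a / b ^ 2 : ℕ) : ℂ) * starRingEnd ℂ (χ (a : ZMod (b ^ 2)))
        - ∑ a ∈ Finset.range (b ^ 2),
          ((n * a / b ^ 2 : ℕ) : ℂ) * starRingEnd ℂ (χ (a : ZMod (b ^ 2))) := by
    rw [← Finset.sum_sub_distrib]
    refine Finset.sum_congr rfl fun a _ => ?_
    rw [d, Int.cast_sub, Int.cast_natCast, Int.cast_natCast, sub_mul]
  rw [hs, B1bar]
  rw [Nat.cast_pow] at e1 e2
  rw [Nat.cast_add n 1, Nat.cast_one] at e2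
  have hb2 : (b : ℂ) ^ 2 ≠ 0 := pow_ne_zero 2 hb0
  apply mul_left_cancel₀ hb2
  rw [mul_sub, e1, e2]
  field_simp
  push_cast
  ring
end

section
/- Let b be a prime, m = b², and let χ be a Dirichlet character modulo m that is induced by a character ψ modulo b (i.e., χ is not primitive, so χ(a) = ψ(a mod b) for all a with gcd(a,m) = 1). Then the diagonal character sum vanishes: S_G(χ) = 0. -/
open Finset
open scoped Classical

open Collision in
theorem stmt10 (b : ℕ) (hb : b.Prime) (χ : DirichletCharacter ℂ (b ^ 2))
    (ψ : DirichletCharacter ℂ b)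
    (hχ : χ = DirichletCharacter.changeLevel (dvd_pow_self b two_ne_zero) ψ) :
    SG b χ = 0 := by
  have hb0 : 0 < b := hb.pos
  have key : ∀ n : ℕ, χ (n : ZMod (b ^ 2)) = ψ (n : ZMod b) := by
    intro n
    by_cases h : n.Coprime b
    · have h2 : IsUnit (n : ZMod (b ^ 2)) :=
        (ZMod.isUnit_iff_coprime n (b ^ 2)).2 (h.pow_right 2)
      obtain ⟨u, hu⟩ := h2
      rw [hχ, ← hu, DirichletCharacter.changeLevel_eq_cast_of_dvd, hu,
        ZMod.cast_natCast (dvd_pow_self b two_ne_zero)]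
    · rw [MulChar.map_nonunit, MulChar.map_nonunit]
      · rwa [ZMod.isUnit_iff_coprime]
      · rw [ZMod.isUnit_iff_coprime]
        intro h'
        exact h ((Nat.coprime_pow_right_iff (by norm_num) _ _).1 h')
  have hG : diagSet b = (Finset.range b).image (fun k => b * k + k) := by
    ext n
    simp only [diagSet, Finset.mem_filter, Finset.mem_range, Finset.mem_image]
    constructor
    · rintro ⟨_, h⟩
      refine ⟨n % b, Nat.mod_lt _ hb0, ?_⟩
      have := Nat.div_add_mod n b
      rwa [h] at this
    · rintro ⟨k, hk, rfl⟩
      refine ⟨by nlinarith, ?_⟩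
      rw [Nat.mul_add_div hb0, Nat.mul_add_mod, Nat.div_eq_of_lt hk, Nat.mod_eq_of_lt hk,
        Nat.add_zero]
  have hinj : Function.Injective (fun k : ℕ => b * k + k) := by
    intro x y h
    have h' : (b + 1) * x = (b + 1) * y := by
      simp only at h
      linarith
    exact Nat.eq_of_mul_eq_mul_left (Nat.succ_pos b) h'
  rw [SG, hG, Finset.sum_image (fun x _ y _ h => hinj h)]
  have : ∀ k ∈ Finset.range b,
      (starRingEnd ℂ (χ ((b * k + k + 1 : ℕ) : ZMod (b ^ 2))) -
        starRingEnd ℂ (χ ((b * k + k : ℕ) : ZMod (b ^ 2)))) =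
      starRingEnd ℂ (ψ ((k + 1 : ℕ) : ZMod b)) - starRingEnd ℂ (ψ ((k : ℕ) : ZMod b)) := by
    intro k _
    rw [key, key]
    simp
  rw [Finset.sum_congr rfl this,
    Finset.sum_range_sub (fun k : ℕ => starRingEnd ℂ (ψ (k : ZMod b)))]
  simp
end

section
/- Let b be a prime, m = b², and let χ be an even Dirichlet character modulo m (χ(−1) = 1). Then Ŝ°(χ) = 0. -/
open Finset
open scoped Classical

namespace Collision

lemma mam {k b r : ℕ} (h : r < b) : (k * b + r) % b = r := by
  rw [add_comm, Nat.add_mul_mod_self_right, Nat.mod_eq_of_lt h]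

lemma card_diag (b : ℕ) (hb : b.Prime) : (diagSet b).card = b := by
  have hp := hb.pos
  have : diagSet b = (Finset.range b).image (fun k => k * b + k) := by
    ext n
    simp only [diagSet, Finset.mem_filter, Finset.mem_range, Finset.mem_image]
    constructor
    · rintro ⟨_, h2⟩
      refine ⟨n % b, Nat.mod_lt _ hp, ?_⟩
      have := Nat.div_add_mod n b
      rw [h2, mul_comm] at this
      exact this
    · rintro ⟨k, hk, rfl⟩
      refine ⟨by nlinarith, ?_⟩
      rw [mam hk, add_comm, Nat.add_mul_div_right _ _ hp, Nat.div_eq_of_lt hk, zero_add]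
  rw [this, Finset.card_image_of_injective, Finset.card_range]
  intro x y h
  have h' : x * b + x = y * b + y := h
  have : x * (b + 1) = y * (b + 1) := by linarith
  exact Nat.eq_of_mul_eq_mul_right (Nat.succ_pos b) this

lemma cop_iff (b a : ℕ) (hb : b.Prime) : Nat.gcd a (b ^ 2) = 1 ↔ a % b ≠ 0 := by
  rw [← Nat.coprime_iff_gcd_eq_one, Nat.coprime_pow_right_iff (by norm_num), Nat.coprime_comm,
    hb.coprime_iff_not_dvd, Nat.dvd_iff_mod_eq_zero]

lemma card_coset (b a : ℕ) (hb : b.Prime) (ha : a % b ≠ 0) : (cosetUnits b a).card = b := by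
  have hp := hb.pos
  have hr := Nat.mod_lt a hp
  have : cosetUnits b a = (Finset.range b).image (fun k => k * b + a % b) := by
    ext n
    simp only [cosetUnits, Finset.mem_filter, Finset.mem_range, Finset.mem_image, cop_iff b n hb]
    constructor
    · rintro ⟨h1, _, h2⟩
      refine ⟨n / b, Nat.div_lt_of_lt_mul (by rwa [← pow_two]), ?_⟩
      rw [← h2, mul_comm]
      exact Nat.div_add_mod n b
    · rintro ⟨k, hk, rfl⟩
      have : (k * b + a % b) % b = a % b := mam hr
      refine ⟨by nlinarith, by rwa [this], this⟩
  rw [this, Finset.card_image_of_injective, Finset.card_range]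
  intro x y h
  have h' : x * b + a % b = y * b + a % b := h
  exact Nat.eq_of_mul_eq_mul_right hp (Nat.add_right_cancel h')

lemma floor_add (m a n : ℕ) (ham : a < m) (hc : Nat.Coprime a m) (hn0 : 0 < n) (hn : n < m) :
    n * a / m + n * (m - a) / m + 1 = n := by
  obtain ⟨c, rfl⟩ := Nat.exists_eq_add_of_lt ham
  set m := a + c + 1 with hm
  have hsub : m - a = c + 1 := by omega
  rw [hsub]
  have hr0 : n * a % m ≠ 0 := by
    intro h
    have := Nat.dvd_of_mod_eq_zero h
    have := hc.symm.dvd_of_dvd_mul_right this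
    exact absurd (Nat.le_of_dvd hn0 this) (by omega)
  have hr := Nat.mod_lt (n * a) (show 0 < m by omega)
  have hdm := Nat.div_add_mod (n * a) m
  set q := n * a / m
  set r := n * a % m
  have hs : n * a + n * (c + 1) = n * m := by rw [hm]; ring
  have hqn : q < n := by
    by_contra h
    have : n * m ≤ m * q := by rw [mul_comm]; exact Nat.mul_le_mul_left _ (by omega)
    have : 0 < n * (c+1) := by positivity
    omega
  obtain ⟨t, ht⟩ := Nat.exists_eq_add_of_lt hqn
  have : n * (c + 1) / m = t := by
    apply Nat.div_eq_of_lt_le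
    · rw [ht] at hs ⊢; nlinarith
    · have : 0 < r := by omega
      rw [ht] at hs ⊢; nlinarith
  omega

lemma d_add (m b a n : ℕ) (hm : m = b ^ 2) (ham : a < m) (hm1 : 1 < m) (hc : Nat.Coprime a m)
    (hn : n < m) :
    d b n a + d b n (m - a) = 1 - (if n = 0 then 1 else 0) + (if n = m - 1 then 1 else 0) := by
  have key : ∀ k, k ≤ m → ((k * a / m : ℕ) : ℤ) + ((k * (m - a) / m : ℕ) : ℤ) =
      k - 1 + (if k = 0 then 1 else 0) + (if k = m then 1 else 0) := by
    intro k hk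
    rcases Nat.eq_zero_or_pos k with rfl | h0
    · have : 0 ≠ m := by omega
      simp [this]
    rcases hk.lt_or_eq with h | rfl
    · have := floor_add m a k ham hc h0 h
      rw [if_neg h0.ne', if_neg h.ne]
      omega
    · rw [if_neg h0.ne', if_pos rfl, Nat.mul_div_cancel_left _ h0, Nat.mul_div_cancel_left _ h0]
      omega
  have h1 := key n hn.le
  have h2 := key (n + 1) hn
  unfold d
  rw [← hm]
  push_cast at h1 h2 ⊢
  split_ifs at h1 h2 ⊢ <;> omega

lemma S_add (b a : ℕ) (hb : b.Prime) (ham : a < b ^ 2) (ha : a % b ≠ 0) :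
    S b a + S b (b ^ 2 - a) = -1 := by
  have hp := hb.two_le
  have hm1 : 1 < b ^ 2 := by nlinarith
  have hsum : ∑ n ∈ diagSet b, d b n a + ∑ n ∈ diagSet b, d b n (b ^ 2 - a) = b := by
    rw [← Finset.sum_add_distrib]
    have h0 : 0 ∈ diagSet b := by
      simp only [diagSet, Finset.mem_filter, Finset.mem_range]; simp; omega
    have h1 : b ^ 2 - 1 ∈ diagSet b := by
      simp only [diagSet, Finset.mem_filter, Finset.mem_range]
      refine ⟨by omega, ?_⟩
      obtain ⟨c, rfl⟩ := Nat.exists_eq_add_of_le' (show 1 ≤ b by omega)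
      have : (c + 1) ^ 2 - 1 = c * (c + 1) + c := by
        have : (c + 1) ^ 2 = c * (c + 1) + c + 1 := by ring
        omega
      have hk : c < c + 1 := by omega
      rw [this, mam hk, add_comm, Nat.add_mul_div_right _ _ (by omega),
        Nat.div_eq_of_lt hk, zero_add]
    rw [Finset.sum_congr (s₁ := diagSet b) rfl (fun n hn => d_add (b ^ 2) b a n rfl ham hm1 ((cop_iff b a hb).2 ha)
      (Finset.mem_range.1 (Finset.mem_filter.1 hn).1))]
    rw [Finset.sum_add_distrib, Finset.sum_sub_distrib, Finset.sum_ite_eq', Finset.sum_ite_eq',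
      if_pos h0, if_pos h1]
    simp [card_diag b hb]
  have hfl : a / b + (b ^ 2 - a) / b + 1 = b := by
    have hdm := Nat.div_add_mod a b
    have hr := Nat.mod_lt a hb.pos
    have hq : a / b < b := Nat.div_lt_of_lt_mul (by rwa [← pow_two])
    obtain ⟨t, ht⟩ := Nat.exists_eq_add_of_lt hq
    have hs : b ^ 2 = b * (a / b) + b * t + b := by
      conv_lhs => rw [pow_two]; rhs; rw [ht]
      ring
    have : (b ^ 2 - a) / b = t := by
      have h1 : b ^ 2 - a = (b - a % b) + b * t := by omega
      rw [h1, Nat.add_mul_div_left _ _ hb.pos, Nat.div_eq_of_lt (by omega), zero_add]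
    omega
  unfold S
  have : ((a / b : ℕ) : ℤ) + (((b ^ 2 - a) / b : ℕ) : ℤ) + 1 = b := by exact_mod_cast hfl
  linarith

lemma mod_refl (b a : ℕ) (hb : b.Prime) (ham : a ≤ b ^ 2) (ha : a % b ≠ 0) :
    (b ^ 2 - a) % b = b - a % b := by
  have hr := Nat.mod_lt a hb.pos
  have hdm := Nat.div_add_mod a b
  have h1 : (b ^ 2 - a) + (a % b) ≡ (b - a % b) + a % b [MOD b] := by
    have : b - a % b + a % b = b := by omega
    rw [this]
    have h2 : b ^ 2 - a + a % b ≡ b ^ 2 - a + a [MOD b] := (Nat.mod_modEq a b).add_left _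
    rw [Nat.sub_add_cancel ham] at h2
    refine h2.trans ?_
    simp [Nat.ModEq, pow_two]
  have h3 := Nat.ModEq.add_right_cancel' _ h1
  rw [h3, Nat.mod_eq_of_lt (by omega)]

lemma Scirc_add (b a : ℕ) (hb : b.Prime) (ham : a < b ^ 2) (ha : a % b ≠ 0) :
    Scirc b a + Scirc b (b ^ 2 - a) = 0 := by
  have hr := Nat.mod_lt a hb.pos
  have hma := mod_refl b a hb ham.le ha
  have hre : ∑ a' ∈ cosetUnits b (b ^ 2 - a), (S b a' : ℝ)
      = ∑ a' ∈ cosetUnits b a, (S b (b ^ 2 - a') : ℝ) := by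
    symm
    refine Finset.sum_bij' (fun x _ => b ^ 2 - x) (fun x _ => b ^ 2 - x) ?_ ?_ ?_ ?_ ?_
    · intro x hx
      simp only [cosetUnits, Finset.mem_filter, Finset.mem_range, cop_iff _ _ hb] at hx ⊢
      obtain ⟨h1, h2, h3⟩ := hx
      have h4 := mod_refl b x hb h1.le h2
      have : x ≠ 0 := by rintro rfl; simp at h2
      refine ⟨by omega, by omega, by omega⟩
    · intro x hx
      simp only [cosetUnits, Finset.mem_filter, Finset.mem_range, cop_iff _ _ hb] at hx ⊢
      obtain ⟨h1, h2, h3⟩ := hx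
      have h4 := mod_refl b x hb h1.le h2
      have : x ≠ 0 := by rintro rfl; simp at h2
      refine ⟨by omega, by omega, by omega⟩
    · intro x hx
      have := Finset.mem_range.1 (Finset.mem_filter.1 hx).1
      omega
    · intro x hx
      have := Finset.mem_range.1 (Finset.mem_filter.1 hx).1
      omega
    · intro x hx
      rfl
  have hs : ∀ x, x < b ^ 2 → x % b ≠ 0 → (S b x : ℝ) + (S b (b ^ 2 - x) : ℝ) = -1 := by
    intro x h1 h2
    exact_mod_cast S_add b x hb h1 h2
  have hsum : ∑ a' ∈ cosetUnits b a, (S b a' : ℝ) + ∑ a' ∈ cosetUnits b a, (S b (b ^ 2 - a') : ℝ)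
      = -b := by
    rw [← Finset.sum_add_distrib, Finset.sum_congr rfl (g := fun _ => (-1 : ℝ))]
    · simp [card_coset b a hb ha]
    · intro x hx
      simp only [cosetUnits, Finset.mem_filter, Finset.mem_range, cop_iff _ _ hb] at hx
      exact hs x hx.1 hx.2.1
  have hb0 : (b : ℝ) ≠ 0 := by exact_mod_cast hb.ne_zero
  unfold Scirc
  rw [hre]
  have h5 := hs a ham ha
  have : (1 / (b : ℝ)) * (∑ a' ∈ cosetUnits b a, (S b a' : ℝ) + ∑ a' ∈ cosetUnits b a, (S b (b ^ 2 - a') : ℝ)) = -1 := by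
    rw [hsum]; field_simp
  linarith

end Collision

open Collision in
theorem stmt12 (b : ℕ) (hb : b.Prime) (χ : DirichletCharacter ℂ (b ^ 2))
    (heven : χ.Even) :
    Shat b χ = 0 := by
  unfold Shat
  suffices h : ∑ a ∈ Finset.range (b ^ 2),
      (Scirc b a : ℂ) * starRingEnd ℂ (χ (a : ZMod (b ^ 2))) = 0 by rw [h, mul_zero]
  have hz : ∀ a : ℕ, a % b = 0 → χ (a : ZMod (b ^ 2)) = 0 := by
    intro a ha
    apply χ.map_nonunit
    rw [ZMod.isUnit_iff_coprime]
    intro h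
    exact (cop_iff b a hb).1 h ha
  rw [← Finset.sum_filter_of_ne (p := fun a => a % b ≠ 0)]
  swap
  · intro a _ h h0
    apply h
    rw [hz a h0]; simp
  refine Finset.sum_involution (fun a _ => b ^ 2 - a) ?_ ?_ ?_ ?_
  · intro a ha
    simp only [Finset.mem_filter, Finset.mem_range] at ha
    have hc : χ ((b ^ 2 - a : ℕ) : ZMod (b ^ 2)) = χ (a : ZMod (b ^ 2)) := by
      rw [Nat.cast_sub ha.1.le, ZMod.natCast_self, zero_sub, heven.eval_neg]
    rw [hc, ← add_mul]
    have := Scirc_add b a hb ha.1 ha.2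
    rw [← Complex.ofReal_add, this]; simp
  · intro a ha hne heq
    simp only [Finset.mem_filter, Finset.mem_range] at ha
    apply hne
    have := Scirc_add b a hb ha.1 ha.2
    rw [heq] at this
    have : Scirc b a = 0 := by linarith
    rw [this]; simp
  · intro a ha
    simp only [Finset.mem_filter, Finset.mem_range] at ha ⊢
    have h4 := mod_refl b a hb ha.1.le ha.2
    have : a ≠ 0 := by rintro rfl; simp at ha
    have := Nat.mod_lt a hb.pos
    exact ⟨by omega, by omega⟩
  · intro a ha
    simp only [Finset.mem_filter, Finset.mem_range] at ha
    omega
end
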